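/- Let r ≥ 1 be a natural number and let A = F₂[u₁, …, u_r]/(u₁², …, u_r²) be the quotient of the polynomial ring over the field F₂ with two elements by the squares of all variables. Regard F₂ as an A-module via the augmentation sending every u_i to 0. Then for every natural number n, the Ext group Ext^n_A(F₂, F₂), computed in the abelian category of A-modules, is an F₂-vector space of dimension C(n + r − 1, r − 1). -/

import Mathlib

open MvPolynomial CategoryTheory

/-!
Write `u₁, …, u_r` for the variables and `A` for the truncated polynomial ring. The Cartan complex
`A ⊗ Γ(u₁, …, u_r)`, free over `A` on the divided power monomials, that is, on multisets of indices,
is a resolution of `A ⧸ (u₁, …, u_r)`. Indeed `∂/∂uᵢ` descends to `A` because `2 = 0`, and it gives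
a partial homotopy `hᵢ`, for which `d hᵢ + hᵢ d` is the identity on multisets containing `i` and
`uᵢ ∂/∂uᵢ` on the others; cycles are turned into boundaries by eliminating one index at a time.

As the `uᵢ` act by zero on the residue ring, they kill the differential of `Hom_A(-, k)`, so `Ext^n`
has a basis indexed by the multisets of size `n` in `r` letters.
-/

universe u v w

section CartanDifferential

variable {σ : Type v} {A : Type u} [CommRing A] {n : ℕ}

section Differential

variable [Fintype σ]

/-- The differential of the Cartan complex `A ⊗ Γ(V)`, where `V` has basis `σ`. Degree `n` is
encoded as `Sym σ n → A`, the coordinates with respect to the divided power monomials `γ_s`; in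
these terms `γ_s ↦ ∑ uᵢ γ_{s - i}`, summed over the distinct `i ∈ s`. -/
def cartanDifferential (u : σ → A) (n : ℕ) : (Sym σ (n + 1) → A) →ₗ[A] (Sym σ n → A) where
  toFun f s := ∑ i, u i * f (i ::ₛ s)
  map_add' f g := by ext s; simp [mul_add, Finset.sum_add_distrib]
  map_smul' c f := by ext s; simp [Finset.mul_sum, mul_left_comm]

lemma cartanDifferential_apply (u : σ → A) (f : Sym σ (n + 1) → A) (s : Sym σ n) :
    cartanDifferential u n f s = ∑ i, u i * f (i ::ₛ s) :=
  rfl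

lemma cartanDifferential_eq_sum_smul (u : σ → A) (f : Sym σ (n + 1) → A) :
    cartanDifferential u n f = ∑ i, u i • fun s ↦ f (i ::ₛ s) := by
  ext s
  simp [cartanDifferential_apply]

lemma mem_range_cartanDifferential_zero {u : σ → A} {f : Sym σ 0 → A} :
    f ∈ LinearMap.range (cartanDifferential u 0) ↔ f Sym.nil ∈ Ideal.span (Set.range u) := by
  rw [Ideal.mem_span_range_iff_exists_fun]
  constructor
  · rintro ⟨g, rfl⟩
    exact ⟨fun i ↦ g (i ::ₛ Sym.nil), by simp [cartanDifferential_apply, mul_comm]⟩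
  · rintro ⟨c, hc⟩
    refine ⟨c ∘ Sym.oneEquiv.symm, funext fun s ↦ ?_⟩
    rw [Sym.eq_nil_of_card_zero s, ← hc, cartanDifferential_apply]
    refine Finset.sum_congr rfl fun i _ ↦ ?_
    rw [mul_comm, show i ::ₛ Sym.nil = Sym.oneEquiv i from rfl, Function.comp_apply,
      Equiv.symm_apply_apply]

/-- The augmentation `ε : A → M` extended to degree zero of the Cartan complex, which is
`Sym σ 0 → A` rather than `A`. -/
noncomputable def cartanAugmentation (σ : Type v) {M : Type w} [AddCommGroup M] [Module A M]
    (ε : A →ₗ[A] M) : (Sym σ 0 → A) →ₗ[A] M :=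
  ε ∘ₗ LinearMap.proj Sym.nil

lemma cartanDifferential_cartanAugmentation_exact {u : σ → A} {M : Type w}
    [AddCommGroup M] [Module A M] {ε : A →ₗ[A] M}
    (hε : LinearMap.ker ε = Ideal.span (Set.range u)) :
    Function.Exact (cartanDifferential u 0) (cartanAugmentation σ ε) := fun f ↦ by
  rw [← LinearMap.coe_range, SetLike.mem_coe, mem_range_cartanDifferential_zero, ← hε]
  rfl

lemma cartanDifferential_comp_cartanDifferential [CharP A 2] {u : σ → A} (hu : ∀ i, u i ^ 2 = 0)
    (n : ℕ) : cartanDifferential u n ∘ₗ cartanDifferential u (n + 1) = 0 := by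
  ext1 f
  ext s
  simp only [LinearMap.comp_apply, cartanDifferential_apply, Finset.mul_sum, ← mul_assoc]
  rw [← Fintype.sum_prod_type']
  -- The terms at `(i, j)` and `(j, i)` cancel, and the diagonal ones contain `u i ^ 2`.
  refine Finset.sum_ninvolution Prod.swap ?_ ?_ (by simp) (by simp)
  · rintro ⟨i, j⟩
    rw [Prod.swap_prod_mk, Sym.cons_swap, mul_comm (u i)]
    exact CharTwo.add_self_eq_zero _
  · rintro ⟨i, j⟩ hij hswap
    obtain rfl : j = i := congrArg Prod.fst hswap
    exact hij (by rw [← sq, hu, zero_mul])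

end Differential

section Homotopy

variable [DecidableEq σ] {R : Type w} [CommSemiring R] [Algebra R A]

/-- The partial contracting homotopy `a γ_s ↦ D a γ_{s + i}` of the Cartan complex, where `D` plays
the role of `∂/∂uᵢ`. -/
def cartanHomotopy (D : Derivation R A A) (i : σ) (f : Sym σ n → A) (s : Sym σ (n + 1)) : A :=
  if h : i ∈ s then D (f (s.erase i h)) else 0

lemma cartanHomotopy_cons_self (D : Derivation R A A) (i : σ) (f : Sym σ n → A) (s : Sym σ n) :
    cartanHomotopy D i f (i ::ₛ s) = D (f s) := by
  simp [cartanHomotopy]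

lemma cartanHomotopy_of_notMem (D : Derivation R A A) {i : σ} (f : Sym σ n → A)
    {s : Sym σ (n + 1)} (hi : i ∉ s) : cartanHomotopy D i f s = 0 :=
  dif_neg hi

variable [Fintype σ]

lemma cartanDifferential_cartanHomotopy_of_notMem (u : σ → A) (D : Derivation R A A) {i : σ}
    (f : Sym σ (n + 1) → A) {s : Sym σ (n + 1)} (hi : i ∉ s) :
    cartanDifferential u (n + 1) (cartanHomotopy D i f) s = u i * D (f s) := by
  rw [cartanDifferential_apply, Fintype.sum_eq_single i, cartanHomotopy_cons_self]
  intro j hj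
  rw [cartanHomotopy_of_notMem D f (by simp [hj.symm, hi]), mul_zero]

lemma cartanDifferential_cartanHomotopy_cons_self [CharP A 2] {u : σ → A} {D : Derivation R A A}
    {i : σ} (hD : ∀ j, D (u j) = if i = j then 1 else 0) (f : Sym σ (n + 1) → A) (s : Sym σ n) :
    cartanDifferential u (n + 1) (cartanHomotopy D i f) (i ::ₛ s) =
      f (i ::ₛ s) + D (cartanDifferential u n f s) := by
  have hD_sum : D (cartanDifferential u n f s) =
      ∑ j, u j * D (f (j ::ₛ s)) + f (i ::ₛ s) := by
    simp [cartanDifferential_apply, hD, Finset.sum_add_distrib]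
  simp only [cartanDifferential_apply u (cartanHomotopy D i f), Sym.cons_swap _ i,
    cartanHomotopy_cons_self]
  rw [hD_sum, add_comm, CharTwo.add_cancel_right]

lemma exists_cartanDifferential_eq_of_mem [CharP A 2] {u : σ → A} {D : σ → Derivation R A A}
    (hu : ∀ i, u i ^ 2 = 0) (hD : ∀ i j, D i (u j) = if i = j then 1 else 0)
    {f : Sym σ (n + 1) → A} (hf : cartanDifferential u n f = 0) (t : Finset σ) :
    ∃ g, ∀ s, ∀ i ∈ t, i ∈ s → cartanDifferential u (n + 1) g s = f s := by
  induction t using Finset.induction_on with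
  | empty => simp
  | insert i t _ ih =>
    obtain ⟨g, hg⟩ := ih
    let f' := f - cartanDifferential u (n + 1) g
    have hf' : cartanDifferential u n f' = 0 := by
      rw [map_sub, hf, ← LinearMap.comp_apply, cartanDifferential_comp_cartanDifferential hu,
        LinearMap.zero_apply, sub_zero]
    -- `f'` vanishes on the multisets already settled, so the error term `uᵢ Dᵢ f'` does too.
    refine ⟨g + cartanHomotopy (D i) i f', fun s j hj hjs ↦ ?_⟩
    rw [map_add, Pi.add_apply, ← eq_sub_iff_add_eq']
    by_cases hi : i ∈ s
    · obtain ⟨s, rfl⟩ := Sym.exists_cons_of_mem hi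
      rw [cartanDifferential_cartanHomotopy_cons_self (hD i), hf', Pi.zero_apply, map_zero,
        add_zero]
      rfl
    · obtain rfl | hjt := Finset.mem_insert.1 hj
      · exact absurd hjs hi
      have hf's : f' s = 0 := sub_eq_zero.2 (hg s j hjt hjs).symm
      rw [cartanDifferential_cartanHomotopy_of_notMem u (D i) f' hi, hf's, map_zero, mul_zero]
      exact hf's.symm

lemma cartanDifferential_exact [CharP A 2] {u : σ → A} {D : σ → Derivation R A A}
    (hu : ∀ i, u i ^ 2 = 0) (hD : ∀ i j, D i (u j) = if i = j then 1 else 0) (n : ℕ) :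
    Function.Exact (cartanDifferential u (n + 1)) (cartanDifferential u n) := by
  refine LinearMap.exact_of_comp_eq_zero_of_ker_le_range
    (cartanDifferential_comp_cartanDifferential hu n) fun f hf ↦ ?_
  obtain ⟨g, hg⟩ := exists_cartanDifferential_eq_of_mem hu hD hf Finset.univ
  refine ⟨g, funext fun s ↦ ?_⟩
  obtain ⟨i, hi⟩ := s.exists_mem
  exact hg s i (Finset.mem_univ i) hi

end Homotopy

end CartanDifferential

section Ext

variable {C : Type u} [Category.{v} C] [Abelian C]

/-- The projective resolution of `Z` given by an exact complex of projectives augmented to `Z`. -/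
noncomputable abbrev projectiveResolutionOfExact (K : ChainComplex C ℕ)
    (hK : ∀ n, Projective (K.X n)) {Z : C} (π : K.X 0 ⟶ Z) [Epi π] (w : K.d 1 0 ≫ π = 0)
    (exact_zero : (ShortComplex.mk (K.d 1 0) π w).Exact)
    (exact_succ : ∀ n, K.ExactAt (n + 1)) : ProjectiveResolution Z where
  complex := K
  projective := hK
  π := (K.toSingle₀Equiv Z).symm ⟨π, w⟩
  quasiIso := ⟨fun
    | 0 => by
      rw [ChainComplex.quasiIsoAt₀_iff,
        ShortComplex.quasiIso_iff_of_zeros' _ (K.shape _ _ (by simp)) rfl rfl]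
      constructor
      · convert! exact_zero
        exact ChainComplex.toSingle₀Equiv_symm_apply_f_zero π w
      · simpa using! ‹Epi π›
    | n + 1 => by
      rw [quasiIsoAt_iff_exactAt' _ _ (ChainComplex.exactAt_succ_single_obj _ _)]
      exact exact_succ n⟩

/-- `Ext^n(X, Y) ≅ Hom(P_n, Y)` for a projective resolution `P` of `X` which is minimal relative to
`Y`, in the sense that `Hom(P, Y)` has zero differential. -/
noncomputable def extIsoHomOfDCompEqZero (R : Type w) [Ring R] [Linear R C] [EnoughProjectives C]
    {X : C} (P : ProjectiveResolution X) {Y : C}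
    (hY : ∀ n (g : P.complex.X n ⟶ Y), P.complex.d (n + 1) n ≫ g = 0) (n : ℕ) :
    ((Ext R C n).obj (Opposite.op X)).obj Y ≅ ModuleCat.of R (P.complex.X n ⟶ Y) :=
  let K := P.complex.linearYonedaObj R Y
  have hK (i j : ℕ) : K.d i j = 0 := by
    by_cases hij : i + 1 = j
    · subst hij
      ext g
      exact hY i g
    · exact K.shape i j hij
  P.isoExt n Y ≪≫ (K.isoHomologyπ _ n rfl (hK _ n)).symm ≪≫ K.iCyclesIso n _ rfl (hK n _)

end Ext

section CartanResolution

variable {σ A : Type u} [Fintype σ] [CommRing A] [CharP A 2] {u : σ → A}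

/-- The Cartan complex of a family `u` of elements squaring to zero in characteristic two. -/
noncomputable abbrev cartanComplex (hu : ∀ i, u i ^ 2 = 0) : ChainComplex (ModuleCat.{u} A) ℕ :=
  ChainComplex.of (fun n ↦ ModuleCat.of A (Sym σ n → A))
    (fun n ↦ ModuleCat.ofHom (cartanDifferential u n)) fun n ↦ by
      rw [← ModuleCat.ofHom_comp, cartanDifferential_comp_cartanDifferential hu,
        ModuleCat.ofHom_zero]

lemma cartanComplex_d (hu : ∀ i, u i ^ 2 = 0) (n : ℕ) :
    (cartanComplex hu).d (n + 1) n = ModuleCat.ofHom (cartanDifferential u n) := by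
  simp [cartanComplex, ChainComplex.of_d]

variable [DecidableEq σ] {k : Type w} [CommRing k] [Algebra k A] {D : σ → Derivation k A A}

lemma cartanComplex_exactAt_succ (hu : ∀ i, u i ^ 2 = 0)
    (hD : ∀ i j, D i (u j) = if i = j then 1 else 0) (n : ℕ) :
    (cartanComplex hu).ExactAt (n + 1) := by
  rw [HomologicalComplex.exactAt_iff' _ (n + 2) (n + 1) n (by simp) (by simp),
    ShortComplex.ShortExact.moduleCat_exact_iff_function_exact]
  change Function.Exact ((cartanComplex hu).d (n + 2) (n + 1)) ((cartanComplex hu).d (n + 1) n)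
  rw [cartanComplex_d, cartanComplex_d]
  exact cartanDifferential_exact hu hD n

variable {M : Type u} [AddCommGroup M] [Module A M] {ε : A →ₗ[A] M}

/-- The Cartan complex as a free resolution of `M ≅ A ⧸ (u)`. -/
noncomputable abbrev cartanResolution (hu : ∀ i, u i ^ 2 = 0)
    (hD : ∀ i j, D i (u j) = if i = j then 1 else 0) (hε : Function.Surjective ε)
    (hker : LinearMap.ker ε = Ideal.span (Set.range u)) :
    ProjectiveResolution (ModuleCat.of A M) :=
  have hexact := cartanDifferential_cartanAugmentation_exact hker
  have : Epi (ModuleCat.ofHom (cartanAugmentation σ ε)) :=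
    (ModuleCat.epi_iff_surjective _).2 (hε.comp (LinearMap.proj_surjective _))
  projectiveResolutionOfExact (cartanComplex hu)
    (fun n ↦ ModuleCat.projective_of_free (Pi.basisFun A (Sym σ n)))
    (ModuleCat.ofHom (cartanAugmentation σ ε))
    (by rw [cartanComplex_d, ← ModuleCat.ofHom_comp, hexact.linearMap_comp_eq_zero]; rfl)
    (by
      rw [ShortComplex.ShortExact.moduleCat_exact_iff_function_exact]
      simpa only [cartanComplex_d] using! hexact)
    (cartanComplex_exactAt_succ hu hD)

open scoped ModuleCat.Algebra

/-- The basis of `Ext^n_A(M, N)` dual to the divided power monomials of degree `n`, where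
`M ≅ A ⧸ (u)` and `N` is killed by `u`. -/
noncomputable def extLinearEquivSym (hu : ∀ i, u i ^ 2 = 0)
    (hD : ∀ i j, D i (u j) = if i = j then 1 else 0) (hε : Function.Surjective ε)
    (hker : LinearMap.ker ε = Ideal.span (Set.range u)) {N : ModuleCat.{u} A}
    (hN : ∀ i (x : N), u i • x = 0) (n : ℕ) :
    ((Ext k (ModuleCat.{u} A) n).obj (Opposite.op (ModuleCat.of A M))).obj N ≃ₗ[k]
      (Sym σ n → N) :=
  have hd (n : ℕ) (g : (cartanComplex hu).X n ⟶ N) : (cartanComplex hu).d (n + 1) n ≫ g = 0 := by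
    rw [cartanComplex_d]
    refine ModuleCat.hom_ext (LinearMap.ext fun f ↦ ?_)
    change g (cartanDifferential u n f) = 0
    rw [cartanDifferential_eq_sum_smul, map_sum]
    exact Finset.sum_eq_zero fun i _ ↦ by rw [map_smul, hN]
  (extIsoHomOfDCompEqZero k (cartanResolution hu hD hε hker) hd n).toLinearEquiv ≪≫ₗ
    ModuleCat.homLinearEquiv (M := ModuleCat.of A (Sym σ n → A)) ≪≫ₗ
    ((Pi.basisFun A (Sym σ n)).constr k).symm

lemma finrank_ext_eq_multichoose [Nontrivial k] [Module A k] [IsScalarTower k A k]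
    (hu : ∀ i, u i ^ 2 = 0) (hD : ∀ i j, D i (u j) = if i = j then 1 else 0)
    (hε : Function.Surjective ε) (hker : LinearMap.ker ε = Ideal.span (Set.range u))
    {N : ModuleCat.{u} A} (hN : ∀ i (x : N), u i • x = 0) (e : N ≃ₗ[A] k) (n : ℕ) :
    Module.finrank k (((Ext k (ModuleCat.{u} A) n).obj (Opposite.op (ModuleCat.of A M))).obj N) =
      (Fintype.card σ).multichoose n := by
  let e' : (Sym σ n → N) ≃ₗ[k] (Sym σ n → k) := .piCongrRight fun _ ↦ e.restrictScalars k
  rw [(extLinearEquivSym hu hD hε hker hN n ≪≫ₗ e').finrank_eq,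
    Module.finrank_fintype_fun_eq_card, Sym.card_sym_eq_multichoose]

end CartanResolution

lemma derivation_mem_span {R A : Type*} [CommSemiring R] [CommSemiring A] [Algebra R A]
    (D : Derivation R A A) {s : Set A} (hs : ∀ x ∈ s, D x ∈ Ideal.span s) {x : A}
    (hx : x ∈ Ideal.span s) : D x ∈ Ideal.span s := by
  induction hx using Submodule.span_induction with
  | mem x hx => exact hs x hx
  | zero => simp
  | add x y _ _ hx hy => simpa using add_mem hx hy
  | smul a x hx hDx =>
    rw [smul_eq_mul, D.leibniz]
    exact add_mem (Ideal.mul_mem_left _ a hDx) (Ideal.mul_mem_right (D a) _ hx)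

/-- The truncated polynomial ring `k[uᵢ : i ∈ σ] ⧸ (uᵢ²)`. -/
abbrev TruncatedPolynomial (σ : Type u) (k : Type v) [CommRing k] : Type max u v :=
  MvPolynomial σ k ⧸ Ideal.span (Set.range fun i : σ ↦ (X i : MvPolynomial σ k) ^ 2)

namespace TruncatedPolynomial

variable {σ : Type u} {k : Type v} [CommRing k]

/-- The class `uᵢ` of the variable `X i`. -/
noncomputable def gen (k : Type v) [CommRing k] (i : σ) : TruncatedPolynomial σ k :=
  Ideal.Quotient.mk _ (X i)

lemma gen_sq (i : σ) : gen k i ^ 2 = 0 :=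
  Ideal.Quotient.eq_zero_iff_mem.2 (Ideal.subset_span ⟨i, rfl⟩)

/-- The augmentation `uᵢ ↦ 0`. -/
noncomputable def augmentation (σ : Type u) (k : Type v) [CommRing k] :
    TruncatedPolynomial σ k →+* k :=
  Ideal.Quotient.lift _ (eval fun _ ↦ 0) fun p hp ↦ by
    refine (Ideal.span_le (I := RingHom.ker (eval fun _ : σ ↦ (0 : k)))).2 ?_ hp
    rintro _ ⟨i, rfl⟩
    exact RingHom.mem_ker.2 (by simp)

lemma augmentation_algebraMap (c : k) :
    augmentation σ k (algebraMap k (TruncatedPolynomial σ k) c) = c :=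
  eval_C c

lemma ker_augmentation : RingHom.ker (augmentation σ k) = Ideal.span (Set.range (gen k)) := by
  have ker_eval : RingHom.ker (eval fun _ : σ ↦ (0 : k)) = idealOfVars σ k := by
    ext p
    rw [← pow_one (idealOfVars σ k), mem_pow_idealOfVars_iff', RingHom.mem_ker]
    simp [Finsupp.degree_eq_zero_iff, eval_zero', constantCoeff_eq]
  rw [augmentation, Ideal.ker_quotient_lift, ker_eval, idealOfVars, Ideal.map_span,
    ← Set.range_comp]
  rfl

lemma augmentation_gen (i : σ) : augmentation σ k (gen k i) = 0 :=
  eval_X i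

variable [CharP k 2]

instance : CharP (TruncatedPolynomial σ k) 2 :=
  charP_of_injective_algebraMap
    (Function.LeftInverse.injective (augmentation_algebraMap (σ := σ) (k := k))) 2

lemma pderiv_mem_span_sq (i : σ) {p : MvPolynomial σ k}
    (hp : p ∈ Ideal.span (Set.range fun i : σ ↦ (X i : MvPolynomial σ k) ^ 2)) :
    pderiv i p ∈ Ideal.span (Set.range fun i : σ ↦ (X i : MvPolynomial σ k) ^ 2) := by
  refine derivation_mem_span (pderiv i) ?_ hp
  rintro _ ⟨j, rfl⟩
  simp [Derivation.leibniz_pow, CharTwo.two_eq_zero]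

/-- The partial derivative `∂/∂uᵢ`, which is well defined as `∂(uᵢ²)/∂uᵢ = 2 uᵢ = 0`. -/
noncomputable def partialDeriv (i : σ) :
    Derivation k (TruncatedPolynomial σ k) (TruncatedPolynomial σ k) :=
  Derivation.liftOfSurjective (f := Ideal.Quotient.mkₐ k _) (Ideal.Quotient.mkₐ_surjective k _)
    (d := pderiv i) fun p hp ↦ by
      rw [Ideal.Quotient.mkₐ_eq_mk, Ideal.Quotient.eq_zero_iff_mem] at hp ⊢
      exact pderiv_mem_span_sq i hp

lemma partialDeriv_mk (i : σ) (p : MvPolynomial σ k) :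
    partialDeriv i (Ideal.Quotient.mk _ p) = Ideal.Quotient.mk _ (pderiv i p) := by
  rw [partialDeriv]
  exact Derivation.liftOfSurjective_apply (Ideal.Quotient.mkₐ_surjective k _) _ p

lemma partialDeriv_gen [DecidableEq σ] (i j : σ) :
    partialDeriv i (gen k j) = if i = j then 1 else 0 := by
  rw [gen, partialDeriv_mk, pderiv_X, Pi.single_apply, apply_ite (Ideal.Quotient.mk _), map_one,
    map_zero]
  simp only [eq_comm]

end TruncatedPolynomial

open TruncatedPolynomial in
open scoped ModuleCat.Algebra in
theorem ext_exterior_f2_dimension_general (σ k : Type u) [Fintype σ] [CommRing k] [CharP k 2]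
    (n : ℕ) :
    letI : Module (TruncatedPolynomial σ k) k := Module.compHom k (augmentation σ k)
    Module.finrank k
      (((Ext k (ModuleCat (TruncatedPolynomial σ k)) n).obj
        (Opposite.op (ModuleCat.of (TruncatedPolynomial σ k) k))).obj
          (ModuleCat.of (TruncatedPolynomial σ k) k)) = (Fintype.card σ).multichoose n := by
  classical
  let : Module (TruncatedPolynomial σ k) k := Module.compHom k (augmentation σ k)
  let ε : TruncatedPolynomial σ k →ₗ[TruncatedPolynomial σ k] k :=
    { augmentation σ k with map_smul' := map_mul (augmentation σ k) }
  have hε : Function.Surjective ε := fun c ↦ ⟨algebraMap k _ c, augmentation_algebraMap c⟩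
  have hgen (i : σ) (x : k) : gen k i • x = 0 :=
    (congrArg (· * x) (augmentation_gen i)).trans (zero_mul x)
  have : Nontrivial k := CharP.nontrivial_of_char_ne_one (R := k) (v := 2) (by decide)
  have hker : LinearMap.ker ε = Ideal.span (Set.range (gen k)) := ker_augmentation
  have := IsScalarTower.of_algebraMap_smul (R := k) (A := TruncatedPolynomial σ k) (M := k)
    fun c x ↦ congrArg (· * x) (augmentation_algebraMap c)
  exact finrank_ext_eq_multichoose (N := ModuleCat.of _ k) gen_sq partialDeriv_gen hε hker hgen
    (LinearEquiv.refl _ k) n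

/-- For `A = F₂[u₁, …, u_r]/(u₁², …, u_r²)` with `r ≥ 1` and `F₂` viewed as an
`A`-module via the augmentation `uᵢ ↦ 0`, the Ext group `Ext^n_A(F₂, F₂)` in the
abelian category of `A`-modules is an `F₂`-vector space of dimension
`C(n + r - 1, r - 1)` for every `n`. -/
theorem ext_exterior_f2_dimension
    (r : ℕ) (hr : 1 ≤ r) (n : ℕ) :
    letI A := MvPolynomial (Fin r) (ZMod 2) ⧸
      Ideal.span (Set.range fun i : Fin r => (X i : MvPolynomial (Fin r) (ZMod 2)) ^ 2)
    letI φ : A →+* ZMod 2 := Ideal.Quotient.lift _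
      (MvPolynomial.eval (fun _ : Fin r => (0 : ZMod 2)))
      (fun a ha => by
        refine (Ideal.span_le.mpr ?_ :
          _ ≤ RingHom.ker (MvPolynomial.eval (fun _ : Fin r => (0 : ZMod 2)))) ha
        rintro x ⟨i, rfl⟩
        simp [RingHom.mem_ker])
    letI : Module A (ZMod 2) := Module.compHom (ZMod 2) φ
    Module.finrank (ZMod 2)
      (((Ext (ZMod 2) (ModuleCat A) n).obj (Opposite.op (ModuleCat.of A (ZMod 2)))).obj
        (ModuleCat.of A (ZMod 2))) = (n + r - 1).choose (r - 1) := by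
  refine (ext_exterior_f2_dimension_general (Fin r) (ZMod 2) n).trans ?_
  rw [Fintype.card_fin, Nat.multichoose_eq, add_comm r n]
  exact Nat.choose_symm_of_eq_add (by lia)
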